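/- Let q = 4 and k ≥ 1 an integer, and let g(x) = x + S_{2k}(x)^{q^{2k}} + S_{2k}(x)^{q^k+3}. If a ∈ F_{q^{3k}} satisfies a + a^{q^k} + a^{q^{2k}} ≠ 0 (nonvanishing relative trace to F_{q^k}), then there exists y ∈ F_{q^k} such that Tr(a·g(x+y)) − Tr(a·g(x)) = Tr(a·y) ≠ 0 for all x ∈ F_{q^{3k}}, where Tr = Tr_{q^{3k}/2} is the absolute trace to F_2; consequently Σ_{x ∈ F_{q^{3k}}} (−1)^{Tr(a·g(x))} = 0. -/

import Mathlib

/-- `S2k q k x = x + x^q + x^(q^2) + ⋯ + x^(q^(2k-1))`. -/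
def S2k (q k : ℕ) {F : Type*} [Field F] (x : F) : F :=
  ∑ i ∈ Finset.range (2 * k), x ^ q ^ i

/-- The absolute trace to `F_2` of a field with `2^m` elements:
`Tr(x) = x + x^2 + x^4 + ⋯ + x^{2^{m-1}}`. -/
def absTr (m : ℕ) {F : Type*} [Field F] (x : F) : F :=
  ∑ i ∈ Finset.range m, x ^ 2 ^ i

/-- `(-1)^a` for `a ∈ F_2 ⊆ F`: `1` if `a = 0`, `-1` otherwise. -/
def chi {F : Type*} [Field F] [DecidableEq F] (a : F) : ℤ :=
  if a = 0 then 1 else -1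


section Helpers
variable {F : Type*} [Field F]

theorem absTr_add' [CharP F 2] (m : ℕ) (x y : F) : absTr m (x + y) = absTr m x + absTr m y := by
  have : Fact (Nat.Prime 2) := ⟨Nat.prime_two⟩
  simp only [absTr, add_pow_char_pow, Finset.sum_add_distrib]

theorem absTr_sq' [CharP F 2] (m : ℕ) (x : F) : (absTr m x) ^ 2 = absTr m (x ^ 2) := by
  have : Fact (Nat.Prime 2) := ⟨Nat.prime_two⟩
  simp only [absTr, sum_pow_char]
  exact Finset.sum_congr rfl fun i _ => by rw [← pow_mul, ← pow_mul, mul_comm]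

theorem absTr_frob' (m : ℕ) (x : F) (hx : x ^ 2 ^ m = x) :
    absTr m (x ^ 2) = absTr m x := by
  have h1 := Finset.sum_range_succ (fun i => x ^ 2 ^ i) m
  have h2 := Finset.sum_range_succ' (fun i => x ^ 2 ^ i) m
  have h3 : absTr m (x ^ 2) = ∑ i ∈ Finset.range m, x ^ 2 ^ (i + 1) :=
    Finset.sum_congr rfl fun i _ => by rw [← pow_mul, pow_succ']
  rw [h3]
  rw [h1, hx] at h2
  simp only [pow_zero, pow_one] at h2
  exact (add_right_cancel h2).symm

theorem absTr_frob_pow' (m : ℕ) (hx : ∀ x : F, x ^ 2 ^ m = x) (j : ℕ) (x : F) :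
    absTr m (x ^ 2 ^ j) = absTr m x := by
  induction j with
  | zero => simp
  | succ j ih => rw [pow_succ, pow_mul, absTr_frob' m _ (hx _), ih]

theorem S2k_add' [CharP F 2] (k : ℕ) (x y : F) : S2k 4 k (x + y) = S2k 4 k x + S2k 4 k y := by
  have : Fact (Nat.Prime 2) := ⟨Nat.prime_two⟩
  have h4 : ∀ i, 4 ^ i = 2 ^ (2 * i) := fun i => by rw [pow_mul]; norm_num
  simp only [S2k, h4, add_pow_char_pow, Finset.sum_add_distrib]

theorem S2k_zero' [CharP F 2] (k : ℕ) (y : F) (hy : y ^ 4 ^ k = y) : S2k 4 k y = 0 := by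
  rw [S2k, two_mul, Finset.sum_range_add]
  have : ∀ i, y ^ 4 ^ (k + i) = y ^ 4 ^ i := fun i => by rw [pow_add, pow_mul, hy]
  simp only [this, CharTwo.add_self_eq_zero]

theorem absTr_exists' [Fintype F] (m : ℕ) (hm : 0 < m) (hF : Fintype.card F = 2 ^ m) :
    ∃ w : F, absTr m w ≠ 0 := by
  by_contra! h
  let P : Polynomial F := ∑ i ∈ Finset.range m, Polynomial.X ^ 2 ^ i
  have hP : P = 0 := by
    refine Polynomial.eq_zero_of_natDegree_lt_card_of_eval_eq_zero P (f := (id : F → F))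
      Function.injective_id (fun w => ?_) ?_
    · simpa [P, Polynomial.eval_finsetSum, absTr] using h w
    · rw [hF]
      refine lt_of_le_of_lt (Polynomial.natDegree_sum_le_of_forall_le (n := 2 ^ (m - 1)) _ _
        fun i hi => ?_) (Nat.pow_lt_pow_right (by norm_num) (by omega))
      rw [Polynomial.natDegree_X_pow]
      have := Finset.mem_range.1 hi
      exact Nat.pow_le_pow_right (by norm_num) (by omega)
  have hc : P.coeff 1 = 1 := by
    simp only [P, Polynomial.finsetSum_coeff, Polynomial.coeff_X_pow]
    rw [Finset.sum_eq_single 0]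
    · simp
    · intro i _ hi
      rw [if_neg]
      exact (Nat.one_lt_two_pow hi).ne
    · intro h0
      exact absurd (Finset.mem_range.2 hm) h0
  rw [hP] at hc
  simp at hc

end Helpers

/-- For `q = 4`, `k ≥ 1` and `g(x) = x + S_{2k}(x)^{q^{2k}} + S_{2k}(x)^{q^k+3}`:
if `a ∈ F_{q^{3k}}` has nonzero relative trace to `F_{q^k}`, then there exists
`y ∈ F_{q^k}` with `Tr(a·g(x+y)) − Tr(a·g(x)) = Tr(a·y) ≠ 0` for all `x`;
consequently `Σ_{x ∈ F_{q^{3k}}} (−1)^{Tr(a·g(x))} = 0`, where `Tr = Tr_{q^{3k}/2}`. -/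
theorem stmt_15 (k : ℕ) (hk : 0 < k)
    (F : Type*) [Field F] [Fintype F] [DecidableEq F]
    (hF : Fintype.card F = 4 ^ (3 * k))
    (a : F) (ha : a + a ^ 4 ^ k + a ^ 4 ^ (2 * k) ≠ 0) :
    (∃ y : F, y ^ 4 ^ k = y ∧ absTr (6 * k) (a * y) ≠ 0 ∧
      ∀ x : F,
        absTr (6 * k) (a * ((x + y) + (S2k 4 k (x + y)) ^ 4 ^ (2 * k)
            + (S2k 4 k (x + y)) ^ (4 ^ k + 3)))
          - absTr (6 * k) (a * (x + (S2k 4 k x) ^ 4 ^ (2 * k)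
            + (S2k 4 k x) ^ (4 ^ k + 3)))
        = absTr (6 * k) (a * y)) ∧
    ∑ x : F, chi (absTr (6 * k)
        (a * (x + (S2k 4 k x) ^ 4 ^ (2 * k) + (S2k 4 k x) ^ (4 ^ k + 3)))) = 0 := by
  have : Fact (Nat.Prime 2) := ⟨Nat.prime_two⟩
  have h4 : ∀ i, 4 ^ i = 2 ^ (2 * i) := fun i => by rw [pow_mul]; norm_num
  have hF2 : Fintype.card F = 2 ^ (6 * k) := by rw [hF, h4]; congr 1; ring
  have : CharP F 2 := charP_of_card_eq_prime_pow hF2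
  have hfr : ∀ x : F, x ^ 2 ^ (6 * k) = x := fun x => by rw [← hF2, FiniteField.pow_card]
  have hfr3 : ∀ x : F, x ^ 4 ^ (3 * k) = x := fun x => by rw [← hF, FiniteField.pow_card]
  have hinv : ∀ (j : ℕ) (x : F), absTr (6 * k) (x ^ 4 ^ j) = absTr (6 * k) x := fun j x => by
    rw [h4, absTr_frob_pow' _ hfr]
  have hpp : ∀ (i j : ℕ) (x : F), (x ^ 4 ^ i) ^ 4 ^ j = x ^ 4 ^ (i + j) := fun i j x => by
    rw [← pow_mul, ← pow_add]
  have hadd : ∀ (j : ℕ) (x y : F), (x + y) ^ 4 ^ j = x ^ 4 ^ j + y ^ 4 ^ j := fun j x y => by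
    rw [h4, add_pow_char_pow]
  have key : ∃ y : F, y ^ 4 ^ k = y ∧ absTr (6 * k) (a * y) ≠ 0 := by
    obtain ⟨w, hw⟩ := absTr_exists' (F := F) (6 * k) (by omega) hF2
    set b := a + a ^ 4 ^ k + a ^ 4 ^ (2 * k) with hb
    obtain ⟨z, hz⟩ : ∃ z, b * z = w := ⟨w / b, mul_div_cancel₀ w ha⟩
    have e3 : k + k = 2 * k := by ring
    have e4 : 2 * k + k = 3 * k := by ring
    have e5 : k + 2 * k = 3 * k := by ring
    refine ⟨z + z ^ 4 ^ k + z ^ 4 ^ (2 * k), ?_, ?_⟩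
    · rw [hadd, hadd, hpp, hpp, e3, e4, hfr3]
      ring
    · have h1 : absTr (6 * k) (a * z ^ 4 ^ k) = absTr (6 * k) (a ^ 4 ^ (2 * k) * z) := by
        rw [← hinv (2 * k), mul_pow, hpp, e5, hfr3]
      have h2 : absTr (6 * k) (a * z ^ 4 ^ (2 * k)) = absTr (6 * k) (a ^ 4 ^ k * z) := by
        rw [← hinv k, mul_pow, hpp, e4, hfr3]
      rw [mul_add, mul_add, absTr_add', absTr_add', h1, h2]
      rw [← hz, hb, add_mul, add_mul, absTr_add', absTr_add'] at hw
      intro h0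
      exact hw (by rw [← h0]; ring)
  obtain ⟨y, hy, hne⟩ := key
  have hS : ∀ x : F, S2k 4 k (x + y) = S2k 4 k x := fun x => by
    rw [S2k_add', S2k_zero' k y hy, add_zero]
  have hg : ∀ x : F, absTr (6 * k) (a * ((x + y) + (S2k 4 k (x + y)) ^ 4 ^ (2 * k)
            + (S2k 4 k (x + y)) ^ (4 ^ k + 3)))
      = absTr (6 * k) (a * (x + (S2k 4 k x) ^ 4 ^ (2 * k)
            + (S2k 4 k x) ^ (4 ^ k + 3))) + absTr (6 * k) (a * y) := fun x => by
    rw [hS, ← absTr_add']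
    congr 1
    ring
  refine ⟨⟨y, hy, hne, fun x => by rw [hg]; ring⟩, ?_⟩
  have h01 : ∀ x : F, absTr (6 * k) x = 0 ∨ absTr (6 * k) x = 1 := fun x => by
    have h := absTr_sq' (6 * k) x
    rw [absTr_frob' _ _ (hfr x)] at h
    have h' : absTr (6 * k) x * (absTr (6 * k) x - 1) = 0 := by linear_combination h
    rcases mul_eq_zero.1 h' with h | h
    · exact Or.inl h
    · exact Or.inr (sub_eq_zero.1 h)
  have hy1 : absTr (6 * k) (a * y) = 1 := (h01 _).resolve_left hne
  have hchi : ∀ x : F, chi (absTr (6 * k) x + 1) = - chi (absTr (6 * k) x) := fun x => by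
    rcases h01 x with h | h
    · simp [h, chi]
    · simp [h, chi, CharTwo.add_self_eq_zero]
  have hsum := Equiv.sum_comp (Equiv.addRight y) (fun x : F => chi (absTr (6 * k)
        (a * (x + (S2k 4 k x) ^ 4 ^ (2 * k) + (S2k 4 k x) ^ (4 ^ k + 3)))))
  simp only [Equiv.coe_addRight, hg, hy1, hchi, Finset.sum_neg_distrib] at hsum
  omega
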